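/- Let G be a finite simple graph with n ≥ 1 vertices and let Ḡ denote its complement. Then: (i) λ'(G) = n − 1 if and only if pc(Ḡ) = 1 (i.e., Ḡ has a Hamiltonian path); and (ii) for every integer r ≥ 2, λ'(G) = n + r − 2 if and only if pc(Ḡ) = r, where λ'(G) is the injective L(2,1)-labelling number of G and pc denotes the path cover number. -/

import Mathlib

/-!
Both parts follow from the single identity `λ'(G) + 2 = n + pc(Gᶜ)`.

For an injective labelling, the distance-two condition is automatic, so the only requirement is that
vertices with consecutive labels are adjacent in `Gᶜ`.

* `exists_labelling_of_cover`: given `m` disjoint paths covering `Gᶜ`, number the vertices path after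
  path, skipping one label between successive paths. This uses `n` labels and `m - 1` gaps, so the
  largest label is `n + m - 2`.
* `exists_cover_of_labelling`: given a labelling with labels at most `k`, each maximal run of
  consecutive used labels is a path of `Gᶜ`. If there are `m` runs, then the `m` labels of their first
  vertices and the `n` successors `f v + 1` are pairwise distinct elements of `{0, …, k + 1}`, so
  `m + n ≤ k + 2`.
-/

open SimpleGraph

/-- `G` has a cover of all its vertices by `m` pairwise vertex-disjoint paths. -/
def HasPathCover {V : Type*} (G : SimpleGraph V) (m : ℕ) : Prop :=
  ∃ (s t : Fin m → V) (P : ∀ i, G.Walk (s i) (t i)),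
    (∀ i, (P i).IsPath) ∧
    (∀ i j, i ≠ j → ∀ v, v ∈ (P i).support → v ∉ (P j).support) ∧
    (∀ v, ∃ i, v ∈ (P i).support)

/-- The path cover number of `G`: the least number of pairwise vertex-disjoint paths
covering all vertices of `G`. -/
noncomputable def pathCoverNumber {V : Type*} (G : SimpleGraph V) : ℕ :=
  sInf {m | HasPathCover G m}

/-- `f` is an `L'(2,1)`-labelling of `G`: an injective labelling such that labels of
adjacent vertices differ by at least 2, and vertices at distance exactly 2 receive
distinct labels. -/
def IsL21InjLabelling {V : Type*} (G : SimpleGraph V) (f : V → ℕ) : Prop :=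
  Function.Injective f ∧
    (∀ u v : V, G.Adj u v → 2 ≤ |(f u : ℤ) - (f v : ℤ)|) ∧
    (∀ u v : V, G.dist u v = 2 → f u ≠ f v)

/-- `λ'(G)`: the least `k` such that `G` has an injective `L(2,1)`-labelling using labels
in `{0, …, k}`. -/
noncomputable def lambdaL21' {V : Type*} (G : SimpleGraph V) : ℕ :=
  sInf {k | ∃ f : V → ℕ, IsL21InjLabelling G f ∧ ∀ v, f v ≤ k}

/-- Concatenating the paths of a cover of `Gᶜ`, with one unused label between successive paths,
gives a labelling of `G`. -/
lemma exists_labelling_of_cover {V : Type*} [Fintype V] (G : SimpleGraph V) {m : ℕ}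
    (h : HasPathCover Gᶜ m) :
    ∃ f : V → ℕ, IsL21InjLabelling G f ∧ ∀ v, f v + 2 ≤ Fintype.card V + m := by
  classical
  obtain ⟨s, t, P, hP, hd, hc⟩ := h
  choose i hi using hc
  have hj : ∀ v, ∃ j, (P (i v)).getVert j = v ∧ j ≤ (P (i v)).length := fun v =>
    Walk.mem_support_iff_exists_getVert.1 (hi v)
  choose j hjv hjl using hj
  have hcard : ∑ a, ((P a).length + 1) ≤ Fintype.card V := by
    have h1 : (Finset.univ.biUnion fun a => (P a).support.toFinset).card =
        ∑ a, (P a).support.toFinset.card := by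
      apply Finset.card_biUnion
      intro a _ b _ hab
      refine Finset.disjoint_left.2 ?_
      intro v hv hv'
      exact hd a b hab v (List.mem_toFinset.1 hv) (List.mem_toFinset.1 hv')
    have h2 : ∀ a, (P a).support.toFinset.card = (P a).length + 1 := fun a => by
      rw [List.toFinset_card_of_nodup (hP a).support_nodup, Walk.length_support]
    simp only [h2] at h1
    rw [← h1]
    exact Finset.card_le_univ _
  -- `S a` is the first label of the path `P a`.
  let S : Fin m → ℕ := fun a => ∑ b ∈ Finset.Iio a, ((P b).length + 2)
  have hsucc : ∀ a, ∑ b ∈ Finset.Iic a, ((P b).length + 2) = S a + ((P a).length + 2) := by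
    intro a
    rw [← Finset.Iio_insert, Finset.sum_insert (by simp), add_comm]
  have hS : ∀ a b, a < b → S a + ((P a).length + 2) ≤ S b := by
    intro a b hab
    rw [← hsucc]
    apply Finset.sum_le_sum_of_subset
    intro c hc
    simp only [Finset.mem_Iic, Finset.mem_Iio] at *
    exact lt_of_le_of_lt hc hab
  have hlt : ∀ u v, i u < i v → S (i u) + j u + 2 ≤ S (i v) + j v := by
    intro u v h
    have := hS _ _ h
    have := hjl u
    omega
  have hinj : ∀ u v, i u = i v → j u = j v → u = v := by
    intro u v h h'
    rw [← hjv u, ← hjv v, h, h']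
  have hadj : ∀ u v, i u = i v → j v = j u + 1 → ¬ G.Adj u v := by
    intro u v h h'
    have h1 : j u < (P (i u)).length := by
      have := hjl v
      rw [← h] at this
      omega
    have h2 := (P (i u)).adj_getVert_succ h1
    rw [hjv u, ← h', h, hjv v] at h2
    exact ((SimpleGraph.compl_adj G _ _).1 h2).2
  have hfinj : Function.Injective fun v => S (i v) + j v := by
    intro u v huv
    simp only at huv
    rcases lt_trichotomy (i u) (i v) with h | h | h
    · have := hlt u v h
      omega
    · rw [h] at huv
      exact hinj u v h (by omega)
    · have := hlt v u h
      omega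
  refine ⟨fun v => S (i v) + j v, ⟨hfinj, ?_, ?_⟩, ?_⟩
  · intro u v huv
    rw [le_abs]
    simp only
    rcases lt_trichotomy (i u) (i v) with h | h | h
    · have := hlt u v h
      omega
    · have h1 := hadj u v h
      have h2 := hadj v u h.symm
      have h3 : j u ≠ j v := fun h' => huv.ne (hinj u v h h')
      have h4 : j v ≠ j u + 1 := fun h' => h1 h' huv
      have h5 : j u ≠ j v + 1 := fun h' => h2 h' huv.symm
      rw [h]
      omega
    · have := hlt v u h
      omega
  · intro u v huv he
    rw [hfinj he] at huv
    simp at huv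
  · intro v
    have h1 : ∑ b ∈ Finset.Iic (i v), ((P b).length + 2) ≤ ∑ b, ((P b).length + 2) :=
      Finset.sum_le_sum_of_subset (Finset.subset_univ _)
    have h2 : ∑ b, ((P b).length + 2) = ∑ b, ((P b).length + 1) + m := by
      simp only [Finset.sum_add_distrib, Finset.sum_const, Finset.card_univ, Fintype.card_fin,
        smul_eq_mul]
      ring
    rw [hsucc] at h1
    have := hjl v
    simp only
    omega

/-- From any vertex `v`, the vertices whose labels continue the run of consecutive used labels
starting at `f v` form a path in `Gᶜ`. -/
lemma exists_run {V : Type*} (G : SimpleGraph V) {f : V → ℕ} (hf : IsL21InjLabelling G f) {k : ℕ}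
    (hk : ∀ v, f v ≤ k) (d : ℕ) : ∀ v, k - f v = d →
    ∃ (t : V) (P : Gᶜ.Walk v t), P.IsPath ∧
      ∀ w, w ∈ P.support ↔ f v ≤ f w ∧ ∀ a, f v ≤ a → a ≤ f w → ∃ x, f x = a := by
  induction d using Nat.strong_induction_on with
  | _ d ih =>
  intro v hv
  by_cases h : ∃ w, f w = f v + 1
  · obtain ⟨w, hw⟩ := h
    have hwk := hk w
    obtain ⟨t, P, hP, hs⟩ := ih (k - f w) (by omega) w rfl
    have hne : v ≠ w := by
      rintro rfl
      omega
    have hadj : Gᶜ.Adj v w := by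
      rw [SimpleGraph.compl_adj]
      refine ⟨hne, fun h => ?_⟩
      have := hf.2.1 v w h
      rw [le_abs] at this
      omega
    refine ⟨t, Walk.cons hadj P, ?_, ?_⟩
    · rw [Walk.cons_isPath_iff]
      refine ⟨hP, fun h => ?_⟩
      have := ((hs v).1 h).1
      omega
    · intro x
      rw [Walk.support_cons, List.mem_cons, hs]
      constructor
      · rintro (rfl | ⟨h1, h2⟩)
        · exact ⟨le_rfl, fun a ha ha' => ⟨x, by omega⟩⟩
        · refine ⟨by omega, fun a ha ha' => ?_⟩
          by_cases hav : a = f v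
          · exact ⟨v, hav.symm⟩
          · exact h2 a (by omega) ha'
      · rintro ⟨h1, h2⟩
        by_cases hx : f x = f v
        · exact Or.inl (hf.1 hx)
        · exact Or.inr ⟨by omega, fun a ha ha' => h2 a (by omega) ha'⟩
  · refine ⟨v, Walk.nil, Walk.IsPath.nil, fun w => ?_⟩
    rw [Walk.support_nil, List.mem_singleton]
    constructor
    · rintro rfl
      exact ⟨le_rfl, fun a ha ha' => ⟨w, by omega⟩⟩
    · rintro ⟨h1, h2⟩
      by_contra hne
      have : f w ≠ f v := fun h => hne (hf.1 h)
      exact h (h2 (f v + 1) (by omega) (by omega))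

/-- The maximal runs of consecutive labels form a path cover of `Gᶜ`. -/
lemma exists_cover_of_labelling {V : Type*} [Fintype V] (G : SimpleGraph V) {f : V → ℕ}
    (hf : IsL21InjLabelling G f) {k : ℕ} (hk : ∀ v, f v ≤ k) :
    ∃ m, HasPathCover Gᶜ m ∧ m + Fintype.card V ≤ k + 2 := by
  classical
  -- `A` is the set of first vertices of the maximal runs.
  let A : Finset V := Finset.univ.filter fun v => ∀ w, f w + 1 ≠ f v
  have hA : ∀ v, v ∈ A ↔ ∀ w, f w + 1 ≠ f v := fun v => by simp [A]
  choose t P hP hs using fun v => exists_run G hf hk (k - f v) v rfl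
  refine ⟨A.card, ?_, ?_⟩
  · let e := A.equivFin
    refine ⟨fun i => (e.symm i : V), fun i => t (e.symm i), fun i => P (e.symm i),
      fun i => hP _, ?_, ?_⟩
    · -- If two runs meet, the later starting label is preceded by a used label of the earlier run.
      have key : ∀ u v w, v ∈ A → f u < f v → w ∈ (P u).support → w ∉ (P v).support := by
        intro u v w hv huv hu hw
        obtain ⟨x, hx⟩ := ((hs u w).1 hu).2 (f v - 1) (by omega)
          (by have := ((hs v w).1 hw).1; omega)
        exact (hA v).1 hv x (by omega)
      intro i j hij w hi hj
      have hne : f (e.symm i) ≠ f (e.symm j) := fun h =>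
        hij (e.symm.injective (Subtype.ext (hf.1 h)))
      rcases lt_or_gt_of_ne hne with h | h
      · exact key _ _ w (e.symm j).2 h hi hj
      · exact key _ _ w (e.symm i).2 h hj hi
    · have key : ∀ n v, f v = n → ∃ s ∈ A, v ∈ (P s).support := by
        intro n
        induction n with
        | zero =>
          intro v hv
          exact ⟨v, (hA v).2 fun w => by omega, (P v).start_mem_support⟩
        | succ n ih =>
          intro v hv
          by_cases h : v ∈ A
          · exact ⟨v, h, (P v).start_mem_support⟩
          · rw [hA] at h
            push Not at h
            obtain ⟨w, hw⟩ := h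
            obtain ⟨s, hsA, hws⟩ := ih w (by omega)
            obtain ⟨h1, h2⟩ := (hs s w).1 hws
            refine ⟨s, hsA, (hs s v).2 ⟨by omega, fun a ha ha' => ?_⟩⟩
            by_cases hav : a = f v
            · exact ⟨v, hav.symm⟩
            · exact h2 a ha (by omega)
      intro v
      obtain ⟨s, hsA, hv⟩ := key _ v rfl
      refine ⟨e ⟨s, hsA⟩, ?_⟩
      -- The type of `P x` depends on `x`, so the equality `x = s` is eliminated by substitution.
      have transport : ∀ x, x = s → v ∈ (P x).support := by
        rintro x rfl
        exact hv
      exact transport _ (by simp)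
  · have hdisj : Disjoint (A.image f) (Finset.univ.image fun v => f v + 1) := by
      rw [Finset.disjoint_left]
      intro a ha hb
      obtain ⟨v, hv, rfl⟩ := Finset.mem_image.1 ha
      obtain ⟨w, -, hw⟩ := Finset.mem_image.1 hb
      exact (hA v).1 hv w hw
    have hsub : A.image f ∪ (Finset.univ.image fun v => f v + 1) ⊆ Finset.range (k + 2) := by
      intro a ha
      rw [Finset.mem_range]
      rcases Finset.mem_union.1 ha with h | h
      · obtain ⟨v, -, rfl⟩ := Finset.mem_image.1 h
        have := hk v
        omega
      · obtain ⟨v, -, rfl⟩ := Finset.mem_image.1 h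
        have := hk v
        omega
    have hle := Finset.card_le_card hsub
    rwa [Finset.card_union_of_disjoint hdisj, Finset.card_image_of_injective _ hf.1,
      Finset.card_image_of_injective _ fun u v h => hf.1 (Nat.succ_injective h),
      Finset.card_range, Finset.card_univ] at hle

/-- Spreading an enumeration of the vertices over the even labels always works. -/
lemma exists_labelling {V : Type*} [Fintype V] (G : SimpleGraph V) :
    ∃ k, ∃ f : V → ℕ, IsL21InjLabelling G f ∧ ∀ v, f v ≤ k := by
  let e := Fintype.equivFin V
  have hinj : Function.Injective fun v => 2 * (e v : ℕ) := by
    intro u v h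
    simp only at h
    exact e.injective (Fin.ext (by omega))
  refine ⟨2 * Fintype.card V, fun v => 2 * (e v : ℕ), ⟨hinj, ?_, ?_⟩, ?_⟩
  · intro u v h
    have : (e u : ℕ) ≠ e v := fun h' => h.ne (e.injective (Fin.ext h'))
    rw [le_abs]
    push_cast
    omega
  · intro u v huv he
    rw [hinj he] at huv
    simp at huv
  · intro v
    have := (e v).isLt
    simp only
    omega

lemma lambdaL21'_add_two {V : Type*} [Fintype V] [Nonempty V] (G : SimpleGraph V) :
    lambdaL21' G + 2 = Fintype.card V + pathCoverNumber Gᶜ := by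
  have hl : lambdaL21' G ∈ {k | ∃ f : V → ℕ, IsL21InjLabelling G f ∧ ∀ v, f v ≤ k} :=
    Nat.sInf_mem (exists_labelling G)
  obtain ⟨f, hf, hk⟩ := hl
  obtain ⟨m, hm, hmk⟩ := exists_cover_of_labelling G hf hk
  have h1 : pathCoverNumber Gᶜ ≤ m := Nat.sInf_le hm
  have hp : HasPathCover Gᶜ (pathCoverNumber Gᶜ) :=
    Nat.sInf_mem (s := {m | HasPathCover Gᶜ m}) ⟨m, hm⟩
  obtain ⟨g, hg, hgk⟩ := exists_labelling_of_cover G hp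
  have h2 : lambdaL21' G ≤ Fintype.card V + pathCoverNumber Gᶜ - 2 :=
    Nat.sInf_le ⟨g, hg, fun v => by have := hgk v; omega⟩
  have h3 := hgk (Classical.arbitrary V)
  omega

/-- For a graph `G` with `n ≥ 1` vertices and complement `Ḡ`:
(i) `λ'(G) = n − 1` iff `pc(Ḡ) = 1`, and
(ii) for every `r ≥ 2`, `λ'(G) = n + r − 2` iff `pc(Ḡ) = r`. -/
theorem statement19 {V : Type*} [Fintype V] [Nonempty V] (G : SimpleGraph V) :
    (lambdaL21' G = Fintype.card V - 1 ↔ pathCoverNumber Gᶜ = 1) ∧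
      (∀ r : ℕ, 2 ≤ r →
        (lambdaL21' G = Fintype.card V + r - 2 ↔ pathCoverNumber Gᶜ = r)) := by
  have h := lambdaL21'_add_two G
  have hn : 0 < Fintype.card V := Fintype.card_pos
  exact ⟨by omega, fun r hr => by omega⟩
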